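/- Let k be a field of characteristic zero, A = k[x, y] the polynomial ring in two variables, B = k[t], and φ : A → B the k-algebra map with φ(x) = φ(y) = t. Let g be the free Lie algebra over B on two generators e₁, e₂, regarded as an A-module via φ. Then: (i) the element x·[e₁, e₂] is nonzero in g; and (ii) for every Lie algebroid h over A for which there exists v ∈ h with ρ(v) = ∂/∂y, and for every map ι : g → h which is A-linear, preserves Lie brackets, and satisfies ρ_h ∘ ι = 0, one has ι(x·[e₁, e₂]) = 0. In particular, ι is never injective. (This is the paper's Example showing that g admits no quasi-isomorphism into a Lie algebroid with surjective anchor.) -/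

import Mathlib

/-- A Lie algebroid over a commutative `k`-algebra `A` (the ungraded, degree-zero instance of
the dg-Lie algebroids of the paper). -/
structure IsLieAlgebroid (k : Type*) [Field k] {A : Type*} [CommRing A] [Algebra k A]
    {g : Type*} [LieRing g] [LieAlgebra k g] [Module A g] [IsScalarTower k A g]
    (ρ : g →ₗ[A] Derivation k A A) : Prop where
  map_lie : ∀ X Y : g, ρ ⁅X, Y⁆ = ⁅ρ X, ρ Y⁆
  leibniz : ∀ (a : A) (X Y : g), ⁅X, a • Y⁆ = a • ⁅X, Y⁆ + ρ X a • Y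

/-! Let `a ∈ A` kill two elements `X`, `Y` of the kernel of the anchor, and let `D` be the anchor
of some `v`.  Expanding `⁅v, a • Y⁆ = 0` by the Leibniz rule gives `D a • Y = -(a • ⁅v, Y⁆)`.
Since `⁅v, Y⁆` stays in the kernel of the anchor, on which the bracket is `A`-bilinear,
`D a • ⁅X, Y⁆ = -(a • ⁅X, ⁅v, Y⁆⁆) = -⁅a • X, ⁅v, Y⁆⁆ = 0`.

The image of `ι` is killed by `ker φ`, so when `ι` is injective every anchor `D` must preserve
`ker φ`.  Here `∂/∂y` sends `y - x ∈ ker φ` to the unit `1`. -/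

namespace IsLieAlgebroid

variable {k : Type*} [Field k] {A : Type*} [CommRing A] [Algebra k A]
  {h : Type*} [LieRing h] [LieAlgebra k h] [Module A h] [IsScalarTower k A h]
  {ρ : h →ₗ[A] Derivation k A A} {a : A} {X Y : h}

theorem lie_smul_of_anchor_eq_zero (H : IsLieAlgebroid k ρ) (hX : ρ X = 0) (a : A) (Y : h) :
    ⁅X, a • Y⁆ = a • ⁅X, Y⁆ := by
  rw [H.leibniz, hX, Derivation.zero_apply, zero_smul, add_zero]

theorem anchor_lie_eq_zero (H : IsLieAlgebroid k ρ) (v : h) (hY : ρ Y = 0) : ρ ⁅v, Y⁆ = 0 := by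
  rw [H.map_lie, hY, lie_zero]

theorem smul_lie_eq_zero (H : IsLieAlgebroid k ρ) (haX : a • X = 0) (hY : ρ Y = 0) :
    a • ⁅X, Y⁆ = 0 := by
  rw [← lie_skew, smul_neg, ← H.lie_smul_of_anchor_eq_zero hY, haX, lie_zero, neg_zero]

theorem anchor_apply_smul_eq_neg (H : IsLieAlgebroid k ρ) (v : h) (haY : a • Y = 0) :
    ρ v a • Y = -(a • ⁅v, Y⁆) := by
  rw [eq_neg_iff_add_eq_zero, add_comm, ← H.leibniz, haY, lie_zero]

theorem anchor_apply_smul_lie_eq_zero (H : IsLieAlgebroid k ρ) (v : h)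
    (hX : ρ X = 0) (hY : ρ Y = 0) (haX : a • X = 0) (haY : a • Y = 0) :
    ρ v a • ⁅X, Y⁆ = 0 :=
  calc
    ρ v a • ⁅X, Y⁆ = ⁅X, ρ v a • Y⁆ := (H.lie_smul_of_anchor_eq_zero hX _ _).symm
    _ = -⁅X, a • ⁅v, Y⁆⁆ := by rw [H.anchor_apply_smul_eq_neg v haY, lie_neg]
    _ = -(a • ⁅X, ⁅v, Y⁆⁆) := by rw [H.lie_smul_of_anchor_eq_zero hX]
    _ = 0 := by rw [H.smul_lie_eq_zero haX (H.anchor_lie_eq_zero v hY), neg_zero]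

theorem map_anchor_apply_smul_lie_eq_zero (H : IsLieAlgebroid k ρ)
    {B : Type*} [Semiring B] {φ : A →+* B} {g : Type*} [LieRing g] [Module B g] {ι : g →+ h}
    (hA : ∀ (c : A) (x : g), ι (φ c • x) = c • ι x) (hbr : ∀ x y : g, ι ⁅x, y⁆ = ⁅ι x, ι y⁆)
    (hanchor : ∀ x : g, ρ (ι x) = 0) (v : h) (ha : φ a = 0) (x y : g) :
    ι (φ (ρ v a) • ⁅x, y⁆) = 0 := by
  have smul_map_eq_zero (z : g) : a • ι z = 0 := by rw [← hA, ha, zero_smul, map_zero]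
  rw [hA, hbr]
  exact H.anchor_apply_smul_lie_eq_zero v (hanchor x) (hanchor y)
    (smul_map_eq_zero x) (smul_map_eq_zero y)

end IsLieAlgebroid

section

attribute [local instance] LieRing.ofAssociativeRing

theorem smul_lie_freeLieAlgebra_of_eq_zero_iff {R : Type*} [CommRing R] {I : Type*} {i j : I}
    (hij : i ≠ j) (r : R) :
    r • ⁅FreeLieAlgebra.of R i, FreeLieAlgebra.of R j⁆ = 0 ↔ r = 0 := by
  classical
  refine ⟨fun h => ?_, fun h => by rw [h, zero_smul]⟩
  -- Send `of i`, `of j` to `E₀₁`, `E₁₀`, so that their bracket goes to `E₀₀ - E₁₁`.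
  let f : I → Matrix (Fin 2) (Fin 2) R := fun l =>
    if l = i then Matrix.single 0 1 1 else Matrix.single 1 0 1
  have lift_eq_zero := congrArg (FreeLieAlgebra.lift R f) h
  rw [map_smul, LieHom.map_lie, FreeLieAlgebra.lift_of_apply, FreeLieAlgebra.lift_of_apply,
    map_zero] at lift_eq_zero
  simpa [f, hij.symm, Ring.lie_def] using congrFun₂ lift_eq_zero 0 0

end

theorem no_transitive_resolution_general {k : Type*} [Field k]
    {A : Type*} [CommRing A] [Algebra k A] {B : Type*} [CommRing B] (φ : A →+* B)
    {I : Type*} {i j : I} (hij : i ≠ j)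
    {h : Type*} [LieRing h] [LieAlgebra k h] [Module A h] [IsScalarTower k A h]
    {ρ : h →ₗ[A] Derivation k A A} (H : IsLieAlgebroid k ρ)
    {v : h} {a : A} (ha : φ a = 0) (hva : φ (ρ v a) ≠ 0)
    (ι : FreeLieAlgebra B I →+ h)
    (hA : ∀ (c : A) (x : FreeLieAlgebra B I), ι (φ c • x) = c • ι x)
    (hbr : ∀ x y : FreeLieAlgebra B I, ι ⁅x, y⁆ = ⁅ι x, ι y⁆)
    (hanchor : ∀ x : FreeLieAlgebra B I, ρ (ι x) = 0) :
    φ (ρ v a) • ⁅FreeLieAlgebra.of B i, FreeLieAlgebra.of B j⁆ ≠ 0 ∧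
      ι (φ (ρ v a) • ⁅FreeLieAlgebra.of B i, FreeLieAlgebra.of B j⁆) = 0 ∧
      ¬ Function.Injective ι := by
  have ne_zero := (smul_lie_freeLieAlgebra_of_eq_zero_iff hij (φ (ρ v a))).not.mpr hva
  have map_eq_zero := H.map_anchor_apply_smul_lie_eq_zero hA hbr hanchor v ha
    (FreeLieAlgebra.of B i) (FreeLieAlgebra.of B j)
  exact ⟨ne_zero, map_eq_zero, fun hι => ne_zero ((map_eq_zero_iff ι hι).mp map_eq_zero)⟩

/-- Let `A = k[x, y]`, `B = k[t]` and `φ : A → B` the `k`-algebra map with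
`φ(x) = φ(y) = t`.  Let `g` be the free Lie algebra over `B` on two generators `e₁, e₂`,
regarded as an `A`-module via `φ`.  Then: (i) the element `x·⁅e₁, e₂⁆ = φ(x) • ⁅e₁, e₂⁆` is
nonzero in `g`; and (ii) for every Lie algebroid `h` over `A` admitting `v` with
`ρ(v) = ∂/∂y`, and every additive map `ι : g → h` which is `A`-linear (with respect to the
`A`-action on `g` through `φ`), preserves Lie brackets and satisfies `ρ_h ∘ ι = 0`, one has
`ι(x·⁅e₁, e₂⁆) = 0`; in particular `ι` is never injective. -/
theorem no_transitive_resolution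
    (k : Type*) [Field k] [CharZero k]
    -- `A = k[x,y]`, `B = k[t]`, `φ : A → B` with `φ x = φ y = t`
    (φ : MvPolynomial (Fin 2) k →ₐ[k] Polynomial k)
    (hφ : φ = MvPolynomial.aeval fun _ : Fin 2 => (Polynomial.X : Polynomial k))
    -- the two generators of the free Lie algebra `g` over `B`
    (e₁ e₂ : FreeLieAlgebra (Polynomial k) (Fin 2))
    (he₁ : e₁ = FreeLieAlgebra.of (Polynomial k) 0)
    (he₂ : e₂ = FreeLieAlgebra.of (Polynomial k) 1)
    -- a Lie algebroid `h` over `A` whose anchor hits `∂/∂y`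
    (h : Type*) [LieRing h] [LieAlgebra k h]
    [Module (MvPolynomial (Fin 2) k) h] [IsScalarTower k (MvPolynomial (Fin 2) k) h]
    (ρ : h →ₗ[MvPolynomial (Fin 2) k]
      Derivation k (MvPolynomial (Fin 2) k) (MvPolynomial (Fin 2) k))
    (Hh : IsLieAlgebroid k ρ)
    (v : h) (hv : ρ v = MvPolynomial.pderiv 1)
    -- `ι : g → h` additive, `A`-linear over `φ`, bracket-preserving, with `ρ_h ∘ ι = 0`
    (ι : FreeLieAlgebra (Polynomial k) (Fin 2) →+ h)
    (hA : ∀ (a : MvPolynomial (Fin 2) k) (x : FreeLieAlgebra (Polynomial k) (Fin 2)),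
      ι (φ a • x) = a • ι x)
    (hbr : ∀ x y : FreeLieAlgebra (Polynomial k) (Fin 2), ι ⁅x, y⁆ = ⁅ι x, ι y⁆)
    (hanchor : ∀ x : FreeLieAlgebra (Polynomial k) (Fin 2), ρ (ι x) = 0) :
    -- (i) `x·⁅e₁,e₂⁆ ≠ 0` in `g`
    φ (MvPolynomial.X 0) • ⁅e₁, e₂⁆ ≠ 0 ∧
    -- (ii) `ι (x·⁅e₁,e₂⁆) = 0`
    ι (φ (MvPolynomial.X 0) • ⁅e₁, e₂⁆) = 0 ∧
    -- in particular, `ι` is not injective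
    ¬ Function.Injective ι := by
  subst he₁ he₂
  let a : MvPolynomial (Fin 2) k := MvPolynomial.X 1 - MvPolynomial.X 0
  have map_a : φ a = 0 := by simp [a, hφ]
  -- Rescaling `v` to `x • v` turns `∂/∂y (y - x) = 1` into the coefficient `x`.
  let w : h := (MvPolynomial.X 0 : MvPolynomial (Fin 2) k) • v
  have anchor_w_a : ρ w a = MvPolynomial.X 0 := by simp [w, a, hv, MvPolynomial.pderiv_X]
  have map_anchor_ne_zero : φ (ρ w a) ≠ 0 := by simp [anchor_w_a, hφ]
  have general := no_transitive_resolution_general φ.toRingHom zero_ne_one Hh map_a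
    map_anchor_ne_zero ι hA hbr hanchor
  rwa [anchor_w_a] at general
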